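/- Fix γ > 0, let Q : ℝ² → ℂ be smooth (infinitely differentiable), and fix (x, z) ∈ ℝ². Define I⁽⁴⁾Q(x, z; h) = (1/36)·[Q(x−2h, z−2γh) + Q(x−2h, z+2γh) + Q(x+2h, z−2γh) + Q(x+2h, z+2γh)] − (1/9)·[Q(x−h, z−2γh) + Q(x+h, z−2γh) + Q(x−2h, z−γh) + Q(x+2h, z−γh) + Q(x−h, z+2γh) + Q(x+h, z+2γh) + Q(x−2h, z+γh) + Q(x+2h, z+γh)] + (4/9)·[Q(x−h, z−γh) + Q(x+h, z−γh) + Q(x−h, z+γh) + Q(x+h, z+γh)]. Then I⁽⁴⁾Q(x, z; h) = Q(x, z) − (h⁴/6)·[∂⁴Q/∂x⁴(x, z) + γ⁴·∂⁴Q/∂z⁴(x, z)] + O(h⁶) as h → 0⁺; in particular I⁽⁴⁾Q(x, z; h) = Q(x, z) + O(h⁴). -/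

import Mathlib

noncomputable section

/-- The 16-point ring mass-lumping operator `I⁽⁴⁾`. -/
def I4 (γ : ℝ) (Q : ℝ × ℝ → ℂ) (x z h : ℝ) : ℂ :=
  (1 / 36) * (Q (x - 2 * h, z - 2 * γ * h) + Q (x - 2 * h, z + 2 * γ * h)
      + Q (x + 2 * h, z - 2 * γ * h) + Q (x + 2 * h, z + 2 * γ * h))
    - (1 / 9) * (Q (x - h, z - 2 * γ * h) + Q (x + h, z - 2 * γ * h)
        + Q (x - 2 * h, z - γ * h) + Q (x + 2 * h, z - γ * h)
        + Q (x - h, z + 2 * γ * h) + Q (x + h, z + 2 * γ * h)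
        + Q (x - 2 * h, z + γ * h) + Q (x + 2 * h, z + γ * h))
    + (4 / 9) * (Q (x - h, z - γ * h) + Q (x + h, z - γ * h)
        + Q (x - h, z + γ * h) + Q (x + h, z + γ * h))

/-- ∂⁴Q/∂x⁴ at (x, z). -/
def Dx4 (Q : ℝ × ℝ → ℂ) (x z : ℝ) : ℂ := iteratedDeriv 4 (fun t => Q (t, z)) x

/-- ∂⁴Q/∂z⁴ at (x, z). -/
def Dz4 (Q : ℝ × ℝ → ℂ) (x z : ℝ) : ℂ := iteratedDeriv 4 (fun t => Q (x, t)) z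

/-!
`I⁽⁴⁾` is the tensor square of the one-dimensional stencil with weights `-1/6, 2/3, 2/3, -1/6` at
the nodes `-2, -1, 1, 2`, whose moments of order `0, …, 5` are `1, 0, 0, 0, -4, 0`. In the Taylor
expansion of `Q` at `(x, z)`, the degree `k` term contributes products of a moment of order `j` (in
the `x`-direction) with one of order `k - j` (in the `z`-direction). For `k ≤ 5` all of these vanish
except when `k = 0`, or when `k = 4` and `j ∈ {0, 4}`; the latter give `-4 / 4! = -1/6` times the
two pure fourth derivatives.
-/

open Asymptotics Filter Finset Topology
open scoped Nat

theorem exists_pos_bound_of_isBigO_nhdsGT {E : Type*} [SeminormedAddCommGroup E] {f g : ℝ → E}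
    {m n : ℕ} (hf : f =O[𝓝[>] 0] fun h ↦ h ^ m) (hg : g =O[𝓝[>] 0] fun h ↦ h ^ n) :
    ∃ C δ : ℝ, 0 < C ∧ 0 < δ ∧ ∀ h : ℝ, 0 < h → h < δ → ‖f h‖ ≤ C * h ^ m ∧ ‖g h‖ ≤ C * h ^ n := by
  obtain ⟨A, -, hA⟩ := hf.exists_pos
  obtain ⟨B, hB_pos, hB⟩ := hg.exists_pos
  obtain ⟨δ, hδ, hbound⟩ := mem_nhdsGT_iff_exists_Ioo_subset.1
    ((hA.weaken (le_max_left A B)).bound.and (hB.weaken (le_max_right A B)).bound)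
  refine ⟨max A B, δ, lt_max_of_lt_right hB_pos, hδ, fun h h_pos h_lt ↦ ?_⟩
  simpa [abs_of_pos h_pos] using hbound ⟨h_pos, h_lt⟩

section Taylor

variable {E F : Type*} [NormedAddCommGroup E] [NormedSpace ℝ E]
  [NormedAddCommGroup F] [NormedSpace ℝ F] {f : E → F} {n : ℕ}

theorem norm_integral_taylor_remainder_le {p y : E} {M : ℝ}
    (hM : ∀ t ∈ Set.Icc (0 : ℝ) 1, ‖iteratedFDeriv ℝ (n + 1) f (p + t • y)‖ ≤ M) :
    ‖∫ t in (0 : ℝ)..1, (1 - t) ^ n • iteratedFDeriv ℝ (n + 1) f (p + t • y) fun _ ↦ y‖ ≤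
      M * ‖y‖ ^ (n + 1) := by
  have hle : ∀ t ∈ Set.uIoc (0 : ℝ) 1,
      ‖(1 - t) ^ n • iteratedFDeriv ℝ (n + 1) f (p + t • y) fun _ ↦ y‖ ≤ M * ‖y‖ ^ (n + 1) := by
    intro t ht
    rw [Set.uIoc_of_le zero_le_one] at ht
    have hweight : ‖(1 - t) ^ n‖ ≤ 1 := by
      rw [norm_pow, Real.norm_of_nonneg (sub_nonneg.2 ht.2)]
      exact pow_le_one₀ (sub_nonneg.2 ht.2) (by linarith [ht.1])
    calc ‖(1 - t) ^ n • iteratedFDeriv ℝ (n + 1) f (p + t • y) fun _ ↦ y‖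
        ≤ 1 * ‖iteratedFDeriv ℝ (n + 1) f (p + t • y) fun _ ↦ y‖ := by
          rw [norm_smul]; gcongr
      _ ≤ M * ‖y‖ ^ (n + 1) := by
          rw [one_mul]
          refine (ContinuousMultilinearMap.le_opNorm _ _).trans ?_
          rw [prod_const, card_univ, Fintype.card_fin]
          gcongr
          exact hM t (Set.Ioc_subset_Icc_self ht)
  simpa using intervalIntegral.norm_integral_le_of_norm_le_const hle

theorem isBigO_map_add_sub_sum_iteratedFDeriv [CompleteSpace F] {p : E}
    (hf : ContDiffAt ℝ (n + 1) f p) :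
    (fun y ↦ f (p + y) -
      ∑ k ∈ range (n + 1), (k ! : ℝ)⁻¹ • iteratedFDeriv ℝ k f p fun _ ↦ y)
      =O[𝓝 0] fun y ↦ ‖y‖ ^ (n + 1) := by
  set M := ‖iteratedFDeriv ℝ (n + 1) f p‖ + 1
  have hbound : ∀ᶠ q in 𝓝 p, ‖iteratedFDeriv ℝ (n + 1) f q‖ < M :=
    (hf.iteratedFDeriv_right (i := n + 1) (m := 0) (by simp)).continuousAt.norm.eventually_lt
      continuousAt_const (lt_add_one _)
  obtain ⟨r, hr, hball⟩ := Metric.eventually_nhds_iff_ball.1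
    ((hf.eventually (mod_cast ENat.natCast_ne_top (n + 1))).and hbound)
  refine IsBigO.of_bound ((n ! : ℝ)⁻¹ * M) ?_
  filter_upwards [Metric.ball_mem_nhds 0 hr] with y hy
  have hsegment : ∀ t ∈ Set.Icc (0 : ℝ) 1, p + t • y ∈ Metric.ball p r := fun t ht ↦ by
    rw [mem_ball_iff_norm, add_sub_cancel_left, norm_smul, Real.norm_of_nonneg ht.1]
    exact (mul_le_of_le_one_left (norm_nonneg y) ht.2).trans_lt (mem_ball_zero_iff.1 hy)
  rw [map_add_eq_sum_add_integral_iteratedFDeriv fun t ht ↦ (hball _ (hsegment t ht)).1,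
    add_sub_cancel_left, norm_smul, norm_inv, RCLike.norm_natCast, norm_pow, norm_norm, mul_assoc]
  gcongr
  exact norm_integral_taylor_remainder_le fun t ht ↦ (hball _ (hsegment t ht)).2.le

end Taylor

theorem iteratedDeriv_comp_add_smul {𝕜 E F : Type*} [NontriviallyNormedField 𝕜]
    [NormedAddCommGroup E] [NormedSpace 𝕜 E] [NormedAddCommGroup F] [NormedSpace 𝕜 F] {f : E → F}
    {n : ℕ} {p v : E} {t : 𝕜} (hf : ContDiffAt 𝕜 n f (p + t • v)) :
    iteratedDeriv n (fun s : 𝕜 ↦ f (p + s • v)) t =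
      iteratedFDeriv 𝕜 n f (p + t • v) fun _ ↦ v := by
  induction n generalizing t with
  | zero => simp
  | succ n ih =>
    have hline : ContinuousAt (fun s : 𝕜 ↦ p + s • v) t := by fun_prop
    have heq : iteratedDeriv n (fun s : 𝕜 ↦ f (p + s • v)) =ᶠ[𝓝 t]
        fun s ↦ iteratedFDeriv 𝕜 n f (p + s • v) fun _ ↦ v := by
      filter_upwards [hline.eventually (hf.eventually (mod_cast ENat.natCast_ne_top (n + 1)))]
        with s hs
      exact ih (hs.of_le (mod_cast n.le_succ))
    rw [iteratedDeriv_succ, heq.deriv_eq]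
    exact ContDiffAt.deriv_fderiv_add_smul (mod_cast hf)

theorem map_const_smul_add_smul {R ι M N : Type*} [CommSemiring R] [Fintype ι] [DecidableEq ι]
    [AddCommMonoid M] [Module R M] [AddCommMonoid N] [Module R N]
    (m : MultilinearMap R (fun _ : ι ↦ M) N) (a b : R) (u v : M) :
    m (fun _ ↦ a • u + b • v) =
      ∑ s : Finset ι, (a ^ #s * b ^ #sᶜ) • m (s.piecewise (fun _ ↦ u) fun _ ↦ v) := by
  have hsplit (s : Finset ι) : s.piecewise (fun _ ↦ a • u) (fun _ ↦ b • v) =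
      fun i ↦ s.piecewise (fun _ ↦ a) (fun _ ↦ b) i •
        s.piecewise (fun _ ↦ u) (fun _ ↦ v) i := by
    ext i
    by_cases hi : i ∈ s <;> simp [hi]
  calc m (fun _ ↦ a • u + b • v)
      = ∑ s : Finset ι, m (s.piecewise (fun _ ↦ a • u) fun _ ↦ b • v) := m.map_add_univ _ _
    _ = ∑ s : Finset ι, (a ^ #s * b ^ #sᶜ) • m (s.piecewise (fun _ ↦ u) fun _ ↦ v) := by
        simp [hsplit, m.map_smul_univ, prod_piecewise, ← compl_eq_univ_sdiff]

section AlgebraicStencil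

variable {ι R E F : Type*} [Fintype ι] [CommSemiring R] [AddCommMonoid E] [Module R E]
  [AddCommMonoid F] [Module R F]

/-- The moment of order `k` of the one-dimensional stencil with weights `w` at the nodes `a`. -/
def stencilMoment (w a : ι → R) (k : ℕ) : R := ∑ i, w i * a i ^ k

/-- The tensor square of the one-dimensional stencil with weights `w` at the nodes `a`, laid out
along the steps `u` and `v` from the origin; apply it to `fun y ↦ f (p + y)` to centre it at `p`. It
is a linear map so that it can be applied termwise to a Taylor expansion. -/
def tensorStencil (w a : ι → R) (u v : E) : (E → F) →ₗ[R] F :=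
  ∑ i, ∑ j, (w i * w j) • LinearMap.proj (a i • u + a j • v)

variable {w a : ι → R}

theorem tensorStencil_apply (u v : E) (g : E → F) :
    tensorStencil w a u v g = ∑ i, ∑ j, (w i * w j) • g (a i • u + a j • v) := by
  simp [tensorStencil]

theorem tensorStencil_const (u v : E) (c : F) :
    tensorStencil w a u v (fun _ ↦ c) = (stencilMoment w a 0 * stencilMoment w a 0) • c := by
  simp only [tensorStencil_apply, stencilMoment, pow_zero, mul_one, sum_mul_sum, sum_smul]

theorem tensorStencil_multilinear {κ : Type*} [Fintype κ] [DecidableEq κ]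
    (m : MultilinearMap R (fun _ : κ ↦ E) F) (u v : E) :
    tensorStencil w a u v (fun y ↦ m fun _ ↦ y) =
      ∑ s : Finset κ, (stencilMoment w a #s * stencilMoment w a #sᶜ) •
        m (s.piecewise (fun _ ↦ u) fun _ ↦ v) := by
  have hcoeff (s : Finset κ) : stencilMoment w a #s * stencilMoment w a #sᶜ =
      ∑ i, ∑ j, w i * w j * (a i ^ #s * a j ^ #sᶜ) := by
    simp only [stencilMoment, sum_mul_sum, mul_mul_mul_comm]
  simp only [tensorStencil_apply, map_const_smul_add_smul, hcoeff, sum_smul, smul_sum, smul_smul]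
  rw [sum_comm_cycle]

theorem tensorStencil_multilinear_of_cross_moments_eq_zero {κ : Type*} [Fintype κ] [Nonempty κ]
    (h_zero : stencilMoment w a 0 = 1)
    (h_cross : ∀ i j, 0 < i → 0 < j → i + j = Fintype.card κ →
      stencilMoment w a i * stencilMoment w a j = 0)
    (m : MultilinearMap R (fun _ : κ ↦ E) F) (u v : E) :
    tensorStencil w a u v (fun y ↦ m fun _ ↦ y) =
      stencilMoment w a (Fintype.card κ) • (m (fun _ ↦ u) + m fun _ ↦ v) := by
  classical
  have h_mixed (s : Finset κ) (hs : s ≠ univ ∧ s ≠ ∅) :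
      (stencilMoment w a #s * stencilMoment w a #sᶜ) •
        m (s.piecewise (fun _ ↦ u) fun _ ↦ v) = 0 := by
    have h_compl : sᶜ ≠ ∅ := (compl_eq_empty_iff s).not.2 hs.1
    rw [h_cross _ _ (card_pos.2 (nonempty_iff_ne_empty.2 hs.2))
      (card_pos.2 (nonempty_iff_ne_empty.2 h_compl)) (card_add_card_compl s), zero_smul]
  rw [tensorStencil_multilinear, Fintype.sum_eq_add univ ∅ univ_nonempty.ne_empty h_mixed]
  simp [h_zero]

end AlgebraicStencil

section StencilAsymptotics

variable {ι E F : Type*} [Fintype ι] [NormedAddCommGroup E] [NormedSpace ℝ E]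
  [NormedAddCommGroup F] [NormedSpace ℝ F] {w a : ι → ℝ} {n : ℕ}

theorem tensorStencil_smul_isBigO {g : E → F} (hg : g =O[𝓝 0] fun y ↦ ‖y‖ ^ n) (u v : E) :
    (fun h : ℝ ↦ tensorStencil w a (h • u) (h • v) g) =O[𝓝 0] fun h ↦ h ^ n := by
  simp only [tensorStencil_apply]
  refine IsBigO.fun_sum fun i _ ↦ IsBigO.fun_sum fun j _ ↦ IsBigO.const_smul_left ?_ _
  have hnode : (fun h : ℝ ↦ a i • h • u + a j • h • v) = fun h ↦ h • (a i • u + a j • v) := by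
    ext1 h
    module
  have htendsto : Tendsto (fun h : ℝ ↦ a i • h • u + a j • h • v) (𝓝 0) (𝓝 0) :=
    Continuous.tendsto' (by fun_prop) _ _ (by simp)
  have hlinear : (fun h : ℝ ↦ a i • h • u + a j • h • v) =O[𝓝 0] fun h ↦ h := by
    rw [hnode]
    exact isBigO_of_le' (c := ‖a i • u + a j • v‖) _ fun h ↦ by rw [norm_smul, mul_comm]
  exact (hg.comp_tendsto htendsto).trans (hlinear.norm_left.pow n)

theorem tensorStencil_smul_iteratedFDeriv {f : E → F} {p : E} {k : ℕ} (hk : 0 < k)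
    (h_zero : stencilMoment w a 0 = 1)
    (h_cross : ∀ i j, 0 < i → 0 < j → i + j = k → stencilMoment w a i * stencilMoment w a j = 0)
    (u v : E) (h : ℝ) :
    tensorStencil w a (h • u) (h • v) (fun y ↦ iteratedFDeriv ℝ k f p fun _ ↦ y) =
      (stencilMoment w a k * h ^ k) •
        (iteratedFDeriv ℝ k f p (fun _ ↦ u) + iteratedFDeriv ℝ k f p fun _ ↦ v) := by
  have : Nonempty (Fin k) := ⟨0, hk⟩
  have hsum := tensorStencil_multilinear_of_cross_moments_eq_zero (κ := Fin k) h_zero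
    (by simpa only [Fintype.card_fin] using h_cross)
    (iteratedFDeriv ℝ k f p).toMultilinearMap (h • u) (h • v)
  simpa [MultilinearMap.map_smul_univ, ← smul_add, mul_smul] using hsum

theorem tensorStencil_map_add_isBigO [CompleteSpace F] {f : E → F} {p : E}
    (hf : ContDiffAt ℝ (n + 1) f p) (h_zero : stencilMoment w a 0 = 1)
    (h_cross : ∀ i j, 0 < i → 0 < j → i + j ≤ n → stencilMoment w a i * stencilMoment w a j = 0)
    (u v : E) :
    (fun h : ℝ ↦ tensorStencil w a (h • u) (h • v) (fun y ↦ f (p + y)) -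
      (f p + ∑ k ∈ Icc 1 n, (stencilMoment w a k * h ^ k / k !) •
        (iteratedFDeriv ℝ k f p (fun _ ↦ u) + iteratedFDeriv ℝ k f p fun _ ↦ v)))
      =O[𝓝 0] fun h ↦ h ^ (n + 1) := by
  have h_remainder := tensorStencil_smul_isBigO (w := w) (a := a)
    (isBigO_map_add_sub_sum_iteratedFDeriv hf) u v
  refine h_remainder.congr_left fun h ↦ ?_
  set T : (E → F) →ₗ[ℝ] F := tensorStencil w a (h • u) (h • v)
  have h_const : T (fun _ ↦ f p) = f p := by
    rw [tensorStencil_const, h_zero, one_mul, one_smul]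
  have h_term (k : ℕ) (hk : k ∈ Icc 1 n) :
      (k ! : ℝ)⁻¹ • T (fun y ↦ iteratedFDeriv ℝ k f p fun _ ↦ y) =
        (stencilMoment w a k * h ^ k / k !) •
          (iteratedFDeriv ℝ k f p (fun _ ↦ u) + iteratedFDeriv ℝ k f p fun _ ↦ v) := by
    rw [mem_Icc] at hk
    rw [tensorStencil_smul_iteratedFDeriv hk.1 h_zero
      (fun i j hi hj hij ↦ h_cross i j hi hj (hij.trans_le hk.2)), smul_smul, inv_mul_eq_div]
  calc T (fun y ↦ f (p + y) -
        ∑ k ∈ range (n + 1), (k ! : ℝ)⁻¹ • iteratedFDeriv ℝ k f p fun _ ↦ y)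
      = T ((fun y ↦ f (p + y)) -
          ∑ k ∈ range (n + 1), (k ! : ℝ)⁻¹ • fun y ↦ iteratedFDeriv ℝ k f p fun _ ↦ y) := by
        congr 1
        ext y
        simp
    _ = T (fun y ↦ f (p + y)) - (f p + ∑ k ∈ Icc 1 n,
          (k ! : ℝ)⁻¹ • T fun y ↦ iteratedFDeriv ℝ k f p fun _ ↦ y) := by
        simp only [map_sub, map_sum, map_smul]
        rw [range_eq_Ico, sum_eq_sum_Ico_succ_bot n.succ_pos]
        simp [h_const, Ico_add_one_right_eq_Icc]
    _ = _ := by rw [sum_congr rfl h_term]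

end StencilAsymptotics

/-- The nodes of the one-dimensional stencil whose tensor square is `I4`. -/
def lumpingNode : Fin 4 → ℝ := ![-2, -1, 1, 2]

/-- The weights of the one-dimensional stencil whose tensor square is `I4`. -/
def lumpingWeight : Fin 4 → ℝ := ![-1 / 6, 2 / 3, 2 / 3, -1 / 6]

theorem stencilMoment_lumping (k : ℕ) :
    stencilMoment lumpingWeight lumpingNode k = (1 + (-1) ^ k) * (2 / 3 - 2 ^ k / 6) := by
  have hneg : (-2 : ℝ) ^ k = (-1) ^ k * 2 ^ k := neg_pow 2 k
  simp only [stencilMoment, Fin.sum_univ_four, lumpingWeight, lumpingNode, Matrix.cons_val, hneg,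
    one_pow]
  ring

theorem stencilMoment_lumping_mul_eq_zero {i j : ℕ} (hi : 0 < i) (hj : 0 < j) (hij : i + j ≤ 5) :
    stencilMoment lumpingWeight lumpingNode i * stencilMoment lumpingWeight lumpingNode j = 0 := by
  have h_low {k : ℕ} (hk : 0 < k) (hk' : k ≤ 2) :
      stencilMoment lumpingWeight lumpingNode k = 0 := by
    interval_cases k <;> norm_num [stencilMoment_lumping]
  rcases le_or_gt i 2 with hi' | hi'
  · rw [h_low hi hi', zero_mul]
  · rw [h_low hj (by lia), mul_zero]

theorem I4_eq_tensorStencil (γ : ℝ) (Q : ℝ × ℝ → ℂ) (x z h : ℝ) :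
    I4 γ Q x z h = tensorStencil lumpingWeight lumpingNode (h • (1, 0)) (h • (0, γ))
      (fun y ↦ Q ((x, z) + y)) := by
  have hnode (s t : ℝ) : (x, z) + (s • h • ((1 : ℝ), (0 : ℝ)) + t • h • ((0 : ℝ), γ)) =
      (x + s * h, z + t * γ * h) := by
    ext
    · simp
    · simp [mul_assoc, mul_comm h]
  simp only [tensorStencil_apply, hnode, Fin.sum_univ_four, lumpingWeight, lumpingNode,
    Matrix.cons_val, Complex.real_smul, I4, neg_mul, one_mul, ← sub_eq_add_neg]
  push_cast
  ring

section Expansion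

variable {Q : ℝ × ℝ → ℂ} {x z : ℝ}

theorem Dx4_eq_iteratedFDeriv (hQ : ContDiffAt ℝ 4 Q (x, z)) :
    Dx4 Q x z = iteratedFDeriv ℝ 4 Q (x, z) fun _ ↦ (1, 0) := by
  simpa [Dx4] using iteratedDeriv_comp_add_smul (n := 4) (p := ((0 : ℝ), z))
    (v := ((1 : ℝ), (0 : ℝ))) (t := x) (by simpa using hQ)

theorem pow_mul_Dz4_eq_iteratedFDeriv (hQ : ContDiffAt ℝ 4 Q (x, z)) (γ : ℝ) :
    (γ : ℂ) ^ 4 * Dz4 Q x z = iteratedFDeriv ℝ 4 Q (x, z) fun _ ↦ (0, γ) := by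
  have hDz : Dz4 Q x z = iteratedFDeriv ℝ 4 Q (x, z) fun _ ↦ (0, 1) := by
    simpa [Dz4] using iteratedDeriv_comp_add_smul (n := 4) (p := (x, (0 : ℝ)))
      (v := ((0 : ℝ), (1 : ℝ))) (t := z) (by simpa using hQ)
  have hsmul := (iteratedFDeriv ℝ 4 Q (x, z)).map_smul_univ (fun _ ↦ γ) fun _ ↦ (0, 1)
  simpa [hDz] using hsmul.symm

theorem I4_sub_fourth_order_isBigO (γ : ℝ) (hQ : ContDiffAt ℝ 6 Q (x, z)) :
    (fun h : ℝ ↦ I4 γ Q x z h - (Q (x, z)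
      - ((h : ℂ) ^ 4 / 6) * (Dx4 Q x z + (γ : ℂ) ^ 4 * Dz4 Q x z))) =O[𝓝 0] fun h ↦ h ^ 6 := by
  have hQ₄ : ContDiffAt ℝ 4 Q (x, z) := hQ.of_le (by norm_num)
  have h_zero : stencilMoment lumpingWeight lumpingNode 0 = 1 := by
    norm_num [stencilMoment_lumping]
  refine (tensorStencil_map_add_isBigO (n := 5) (f := Q) (p := (x, z)) (mod_cast hQ) h_zero
    (fun _ _ ↦ stencilMoment_lumping_mul_eq_zero) (1, 0) (0, γ)).congr_left fun h ↦ ?_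
  rw [← I4_eq_tensorStencil, Dx4_eq_iteratedFDeriv hQ₄, pow_mul_Dz4_eq_iteratedFDeriv hQ₄]
  norm_num [sum_Icc_succ_top, stencilMoment_lumping, Nat.factorial]
  ring

theorem I4_expansion_general (γ : ℝ) (hQ : ContDiffAt ℝ 6 Q (x, z)) :
    ((fun h : ℝ ↦ I4 γ Q x z h - (Q (x, z)
      - ((h : ℂ) ^ 4 / 6) * (Dx4 Q x z + (γ : ℂ) ^ 4 * Dz4 Q x z))) =O[𝓝 0] fun h ↦ h ^ 6) ∧
    (fun h : ℝ ↦ I4 γ Q x z h - Q (x, z)) =O[𝓝 0] fun h ↦ h ^ 4 := by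
  have h_six := I4_sub_fourth_order_isBigO γ hQ
  refine ⟨h_six, ?_⟩
  have h_main : (fun h : ℝ ↦ (h : ℂ) ^ 4 / 6 * (Dx4 Q x z + (γ : ℂ) ^ 4 * Dz4 Q x z))
      =O[𝓝 0] fun h ↦ h ^ 4 :=
    isBigO_of_le' (c := ‖(Dx4 Q x z + (γ : ℂ) ^ 4 * Dz4 Q x z) / 6‖) _ fun h ↦ le_of_eq <| by
      simp only [norm_mul, norm_div, norm_pow, Complex.norm_real]
      ring
  have h_pow : (fun h : ℝ ↦ h ^ 6) =O[𝓝 0] fun h ↦ h ^ 4 :=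
    (isLittleO_pow_pow (by norm_num)).isBigO
  exact ((h_six.trans h_pow).sub h_main).congr_left fun h ↦ by ring

end Expansion

/-- expansion of the 16-point ring mass-lumping operator I⁽⁴⁾. -/
theorem I4_expansion
    (γ : ℝ) (hγ : 0 < γ) (Q : ℝ × ℝ → ℂ) (hQ : ContDiff ℝ (⊤ : ℕ∞) Q) (x z : ℝ) :
    ∃ C δ : ℝ, 0 < C ∧ 0 < δ ∧ ∀ h : ℝ, 0 < h → h < δ →
      ‖I4 γ Q x z h - (Q (x, z)
          - ((h : ℂ) ^ 4 / 6) * (Dx4 Q x z + (γ : ℂ) ^ 4 * Dz4 Q x z))‖ ≤ C * h ^ 6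
      ∧ ‖I4 γ Q x z h - Q (x, z)‖ ≤ C * h ^ 4 := by
  have ⟨h_six, h_four⟩ := I4_expansion_general γ ((contDiff_infty.1 hQ 6).contDiffAt (x := (x, z)))
  exact exists_pos_bound_of_isBigO_nhdsGT (h_six.mono nhdsWithin_le_nhds)
    (h_four.mono nhdsWithin_le_nhds)

end
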